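/- arXiv:2503.17290 — 7 statements merged into one kernel-verified Lean document; each statement's English description precedes it below -/
import Mathlib

section
/- Let (Ω, ℱ, P) be a probability space, D : Ω → ℝ a bounded measurable random variable, ℋ, 𝒢 ⊆ ℱ sub-σ-algebras, and m₀ a 𝒢-measurable version of E[D | 𝒢] (the propensity score, with 𝒢 = σ(X) and ℋ the σ-algebra generated by the potential outcomes). Assume the unconfoundedness condition E[D | ℋ ⊔ 𝒢] = m₀ P-almost surely, where ℋ ⊔ 𝒢 denotes the σ-algebra generated by ℋ and 𝒢. Then E[D | ℋ ⊔ σ(m₀)] = m₀ P-almost surely; in particular E[D | ℋ ⊔ σ(m₀)] = E[D | σ(m₀)] P-almost surely, so conditional mean independence of D from ℋ given the covariates propagates to conditioning on the propensity score alone. -/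
open MeasureTheory

/-- Unconfoundedness propagates to conditioning on the propensity score:
if `E[D | ℋ ⊔ 𝒢] = m₀` a.s. where `m₀` is a `𝒢`-measurable version of `E[D | 𝒢]`, then
`E[D | ℋ ⊔ σ(m₀)] = m₀` a.s. and in particular `E[D | ℋ ⊔ σ(m₀)] = E[D | σ(m₀)]` a.s. -/
theorem unconfoundedness_propensity_score
    {Ω : Type*} [F : MeasurableSpace Ω] (P : Measure Ω) [IsProbabilityMeasure P]
    (D : Ω → ℝ) (hD : Measurable D) (C : ℝ) (hDbd : ∀ ω, |D ω| ≤ C)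
    (H G : MeasurableSpace Ω) (hH : H ≤ F) (hG : G ≤ F)
    (m₀ : Ω → ℝ) (hm₀ : Measurable[G] m₀) (hm₀ver : m₀ =ᵐ[P] P[D | G])
    (huncf : P[D | H ⊔ G] =ᵐ[P] m₀) :
    P[D | H ⊔ MeasurableSpace.comap m₀ inferInstance] =ᵐ[P] m₀ ∧
    P[D | H ⊔ MeasurableSpace.comap m₀ inferInstance]
      =ᵐ[P] P[D | MeasurableSpace.comap m₀ inferInstance] := by
  have hHG : H ⊔ G ≤ F := sup_le hH hG
  have hcG : MeasurableSpace.comap m₀ inferInstance ≤ G := hm₀.comap_le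
  have hint : Integrable m₀ P := integrable_condExp.congr huncf
  have key : ∀ K : MeasurableSpace Ω, MeasurableSpace.comap m₀ inferInstance ≤ K →
      K ≤ H ⊔ G → P[D | K] =ᵐ[P] m₀ := by
    intro K h1 h2
    have hmeas : Measurable[K] m₀ := measurable_iff_comap_le.mpr h1
    have e1 : P[P[D | H ⊔ G] | K] =ᵐ[P] P[D | K] := condExp_condExp_of_le h2 hHG
    have e2 : P[P[D | H ⊔ G] | K] =ᵐ[P] P[m₀ | K] := condExp_congr_ae huncf
    have e3 : P[m₀ | K] = m₀ :=
      condExp_of_stronglyMeasurable (h2.trans hHG) hmeas.stronglyMeasurable hint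
    rw [e3] at e2
    exact e1.symm.trans e2
  have a := key _ le_sup_right (sup_le_sup_left hcG H)
  have b := key _ le_rfl (hcG.trans le_sup_right)
  exact ⟨a, a.trans b.symm⟩
end

section
/- (In-sample calibration property of isotonic regression.) Let N ≥ 1, d : Fin N → ℝ, and let v : Fin N → ℝ be a nondecreasing vector minimizing Σ_{i} (d i − v i)² over all nondecreasing vectors. Then for every real number c, if the level set B = {i : Fin N | v i = c} is nonempty, one has Σ_{i ∈ B} d i = c · |B|, where |B| is the cardinality of B. Equivalently, the fitted value on each level set equals the empirical mean of d on that level set: 𝔼ₙ[D | ṽ(Xᵢ)] = ṽ(Xᵢ) for all i. -/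
open scoped BigOperators

/-- In-sample calibration property of isotonic regression: on each nonempty level set
of the isotonic fit, the fitted value equals the empirical mean of `d`. -/
theorem isotonic_regression_level_set_mean (N : ℕ) (hN : 1 ≤ N) (d v : Fin N → ℝ)
    (hmono : Monotone v)
    (hmin : ∀ w : Fin N → ℝ, Monotone w →
      ∑ i, (d i - v i) ^ 2 ≤ ∑ i, (d i - w i) ^ 2)
    (c : ℝ) (B : Finset (Fin N)) (hB : B = Finset.univ.filter (fun i => v i = c))
    (hBne : B.Nonempty) :
    ∑ i ∈ B, d i = c * B.card := by
  classical
  let e : Fin N → ℝ := fun i => if v i = c then 1 else 0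
  have hev : ∀ᶠ t : ℝ in nhds 0, ∀ i j, i ≤ j → v i + t * e i ≤ v j + t * e j := by
    rw [Filter.eventually_all]; intro i
    rw [Filter.eventually_all]; intro j
    rcases le_or_gt i j with hij | hij
    · rcases (hmono hij).lt_or_eq with h | h
      · have h1 : Filter.Tendsto (fun t : ℝ => v i + t * e i) (nhds 0) (nhds (v i)) := by
          have : Continuous (fun t : ℝ => v i + t * e i) := by fun_prop
          simpa using this.tendsto 0
        have h2 : Filter.Tendsto (fun t : ℝ => v j + t * e j) (nhds 0) (nhds (v j)) := by
          have : Continuous (fun t : ℝ => v j + t * e j) := by fun_prop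
          simpa using this.tendsto 0
        filter_upwards [h1.eventually_lt h2 h] with t ht _ using ht.le
      · refine Filter.Eventually.of_forall fun t _ => ?_
        simp [e, h]
    · exact Filter.Eventually.of_forall fun t h => absurd h (not_le.mpr hij)
  have hloc : IsLocalMin (fun t : ℝ => ∑ i, (d i - (v i + t * e i)) ^ 2) 0 := by
    filter_upwards [hev] with t ht
    simpa using hmin (fun i => v i + t * e i) (fun i j h => ht i j h)
  have hder : HasDerivAt (fun t : ℝ => ∑ i, (d i - (v i + t * e i)) ^ 2)
      (∑ i, -2 * ((d i - v i) * e i)) 0 := by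
    apply HasDerivAt.fun_sum
    intro i _
    have h := ((((hasDerivAt_id (0 : ℝ)).mul_const (e i)).const_add (v i)).const_sub (d i)).fun_pow 2
    refine h.congr_deriv ?_
    simp
    ring
  have h0 := hloc.hasDerivAt_eq_zero hder
  rw [← Finset.mul_sum] at h0
  have h1 : ∑ i, (d i - v i) * e i = 0 := by linarith
  have h2 : ∑ i, (d i - v i) * e i = ∑ i ∈ B, (d i - c) := by
    rw [hB, Finset.sum_filter]
    refine Finset.sum_congr rfl fun i _ => ?_
    by_cases h : v i = c <;> simp [e, h]
  rw [h2, Finset.sum_sub_distrib, Finset.sum_const, nsmul_eq_mul] at h1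
  linarith
end

section
/- (Isotonic calibration normalizes inverse-probability weights.) Let N ≥ 1, d : Fin N → ℝ with d i ∈ {0,1} for all i, and let v : Fin N → ℝ be a nondecreasing vector minimizing Σ_{i} (d i − v i)² over all nondecreasing vectors, and suppose 0 < v i < 1 for all i. Then Σ_{i} d i / v i = N and Σ_{i} (1 − d i) / (1 − v i) = N; i.e. the inverse propensity weights built from the isotonically calibrated scores sum exactly to the sample size in both the treated and the control group. -/
open scoped BigOperators

theorem iso_orth (N : ℕ) (d v g : Fin N → ℝ) (K : ℝ) (hK : 0 < K)
    (hmin : ∀ w : Fin N → ℝ, Monotone w →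
      ∑ i, (d i - v i) ^ 2 ≤ ∑ i, (d i - w i) ^ 2)
    (hg : ∀ i j, i ≤ j → |g j - g i| ≤ K * (v j - v i)) :
    ∑ i, (d i - v i) * g i = 0 := by
  set S := ∑ i, (d i - v i) * g i with hS
  set Q := ∑ i, g i ^ 2 with hQ
  have hQ0 : 0 ≤ Q := Finset.sum_nonneg fun i _ => sq_nonneg _
  set M := Q + 1 + K * |S| with hM
  have hKS : 0 ≤ K * |S| := by positivity
  have hMpos : 0 < M := by linarith
  have htK : |S / M| * K ≤ 1 := by
    rw [abs_div, abs_of_pos hMpos, div_mul_eq_mul_div, div_le_one hMpos]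
    linarith
  have hw : Monotone (fun i => v i + S / M * g i) := by
    intro i j hij
    have h1 := hg i j hij
    have hv : 0 ≤ v j - v i := by
      have := (abs_nonneg _).trans h1
      exact nonneg_of_mul_nonneg_right this hK
    have h2 : |S / M * (g j - g i)| ≤ v j - v i := by
      rw [abs_mul]
      calc |S / M| * |g j - g i| ≤ |S / M| * (K * (v j - v i)) := by gcongr
        _ = (|S / M| * K) * (v j - v i) := by ring
        _ ≤ 1 * (v j - v i) := by gcongr
        _ = _ := one_mul _
    have h3 := (abs_le.1 h2).1
    simp only
    linarith
  have h := hmin _ hw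
  have he : ∑ i, (d i - (v i + S / M * g i)) ^ 2
      = ∑ i, (d i - v i) ^ 2 - 2 * (S / M) * S + (S / M) ^ 2 * Q := by
    conv_rhs => rw [hQ]
    conv_rhs => enter [1, 2, 2]; rw [hS]
    rw [Finset.mul_sum, Finset.mul_sum, ← Finset.sum_sub_distrib, ← Finset.sum_add_distrib]
    exact Finset.sum_congr rfl fun i _ => by ring
  rw [he] at h
  set t := S / M with ht
  have hSt : S = t * M := by rw [ht]; field_simp
  have h4 : 0 ≤ t ^ 2 * (Q - 2 * M) := by
    have : 2 * t * S = 2 * t * (t * M) := by rw [← hSt]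
    nlinarith
  have h5 : t ^ 2 = 0 := by nlinarith [sq_nonneg t]
  have h6 : t = 0 := by simpa using h5
  rw [hSt, h6, zero_mul]

theorem iso_orth_inv (N : ℕ) (hN : 1 ≤ N) (d v u : Fin N → ℝ)
    (hmin : ∀ w : Fin N → ℝ, Monotone w →
      ∑ i, (d i - v i) ^ 2 ≤ ∑ i, (d i - w i) ^ 2)
    (hu : ∀ i, 0 < u i)
    (hg : ∀ i j, i ≤ j → |u j - u i| ≤ v j - v i) :
    ∑ i, (d i - v i) * (u i)⁻¹ = 0 := by
  haveI : Nonempty (Fin N) := ⟨⟨0, hN⟩⟩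
  obtain ⟨k, hk⟩ := Finite.exists_min u
  have hc := hu k
  refine iso_orth N d v _ ((u k)⁻¹ * (u k)⁻¹) (by positivity) hmin ?_
  intro i j hij
  have hi := hu i
  have hj := hu j
  have e : (u j)⁻¹ - (u i)⁻¹ = ((u j)⁻¹ * (u i)⁻¹) * -(u j - u i) := by
    field_simp
    ring
  rw [e, abs_mul, abs_neg, abs_of_pos (by positivity)]
  have h1 := hk i
  have h2 := hk j
  have h3 := hg i j hij
  gcongr

/-- Isotonic calibration normalizes inverse-probability weights: if `v` is the isotonic
regression of binary labels `d` and `0 < v i < 1` for all `i`, then the inverse propensity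
weights sum exactly to the sample size in both the treated and the control group. -/
theorem isotonic_regression_normalizes_weights (N : ℕ) (hN : 1 ≤ N) (d v : Fin N → ℝ)
    (hd01 : ∀ i, d i = 0 ∨ d i = 1)
    (hmono : Monotone v)
    (hmin : ∀ w : Fin N → ℝ, Monotone w →
      ∑ i, (d i - v i) ^ 2 ≤ ∑ i, (d i - w i) ^ 2)
    (hv0 : ∀ i, 0 < v i) (hv1 : ∀ i, v i < 1) :
    ∑ i, d i / v i = (N : ℝ) ∧ ∑ i, (1 - d i) / (1 - v i) = (N : ℝ) := by
  have h1 := iso_orth_inv N hN d v v hmin hv0 (fun i j hij => by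
    rw [abs_of_nonneg (sub_nonneg.2 (hmono hij))])
  have h2 := iso_orth_inv N hN d v (fun i => 1 - v i) hmin
    (fun i => sub_pos.2 (hv1 i)) (fun i j hij => by
      have := hmono hij
      rw [abs_le]
      constructor <;> linarith)
  have hc : (N : ℝ) = ∑ _i : Fin N, (1 : ℝ) := by simp
  constructor
  · rw [hc, ← sub_eq_zero, ← Finset.sum_sub_distrib, ← h1]
    refine Finset.sum_congr rfl fun i _ => ?_
    have := (hv0 i).ne'
    field_simp
  · rw [hc, eq_comm, ← sub_eq_zero, ← Finset.sum_sub_distrib, ← h2]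
    refine Finset.sum_congr rfl fun i _ => ?_
    have : 1 - v i ≠ 0 := (sub_pos.2 (hv1 i)).ne'
    field_simp
    ring
end

section
/- (Exact bias representation of the AIPW score in the interactive regression model.) For all bounded measurable g1, g0 : 𝒳 → ℝ and all measurable m : 𝒳 → ℝ with ε ≤ m ≤ 1 − ε, the expected AIPW score satisfies the identity E[ψ(g1, g0, m)] = E[(m(X) − m₀(X)) · ((g1(X) − g₀1(X)) / m(X) + (g0(X) − g₀0(X)) / (1 − m(X)))]. -/
open MeasureTheory

lemma aipw_aux {Ω 𝓧 : Type*} [MeasurableSpace Ω] [MeasurableSpace 𝓧]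
    (P : Measure Ω) [IsProbabilityMeasure P]
    (X : Ω → 𝓧) (hX : Measurable X) (Z : Ω → ℝ) (hZ : Integrable Z P)
    (q : Ω → ℝ) (hq : q =ᵐ[P] P[Z | MeasurableSpace.comap X inferInstance])
    (h : 𝓧 → ℝ) (hh : Measurable h) (C : ℝ) (hC : ∀ x, |h x| ≤ C) :
    Integrable (fun ω => h (X ω) * (Z ω - q ω)) P ∧
      ∫ ω, h (X ω) * (Z ω - q ω) ∂P = 0 := by
  have hle : MeasurableSpace.comap X inferInstance ≤ ‹MeasurableSpace Ω› := hX.comap_le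
  have hqi : Integrable q P := integrable_condExp.congr hq.symm
  have hhX : AEStronglyMeasurable (fun ω => h (X ω)) P :=
    (hh.comp hX).aestronglyMeasurable
  have hb : ∀ᵐ ω ∂P, ‖h (X ω)‖ ≤ C := Filter.Eventually.of_forall fun ω => hC _
  have h1 : Integrable (fun ω => h (X ω) * Z ω) P := hZ.bdd_mul hhX hb
  have h2 : Integrable (fun ω => h (X ω) * q ω) P := hqi.bdd_mul hhX hb
  have hsm : StronglyMeasurable[MeasurableSpace.comap X inferInstance] (fun ω => h (X ω)) :=
    (hh.comp (comap_measurable X)).stronglyMeasurable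
  have h3 := condExp_mul_of_stronglyMeasurable_left (μ := P) (g := Z) hsm h1 hZ
  have h4 : ∫ ω, h (X ω) * Z ω ∂P = ∫ ω, h (X ω) * q ω ∂P := by
    rw [← integral_condExp hle (f := fun ω => h (X ω) * Z ω)]
    apply integral_congr_ae
    filter_upwards [h3, hq] with ω e1 e2
    rw [e2]
    exact e1
  have e : (fun ω => h (X ω) * (Z ω - q ω)) = fun ω => h (X ω) * Z ω - h (X ω) * q ω := by
    funext ω
    ring
  rw [e]
  exact ⟨h1.sub h2, by rw [integral_sub h1 h2, h4, sub_self]⟩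

/-- Exact bias representation of the AIPW score in the interactive regression model. -/
theorem aipw_bias_representation
    {Ω 𝓧 : Type*} [MeasurableSpace Ω] [MeasurableSpace 𝓧]
    (P : MeasureTheory.Measure Ω) [MeasureTheory.IsProbabilityMeasure P]
    (X : Ω → 𝓧) (hX : Measurable X)
    (D : Ω → ℝ) (hD : Measurable D) (hD01 : ∀ ω, D ω = 0 ∨ D ω = 1)
    (Y : Ω → ℝ) (hY : MeasureTheory.Integrable Y P)
    (hDY : MeasureTheory.Integrable (fun ω => D ω * Y ω) P)
    (hDY' : MeasureTheory.Integrable (fun ω => (1 - D ω) * Y ω) P)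
    (ε : ℝ) (hε0 : 0 < ε) (hε : ε < 1 / 2)
    (m₀ : 𝓧 → ℝ) (hm₀ : Measurable m₀)
    (hm₀bd : ∀ x, ε ≤ m₀ x ∧ m₀ x ≤ 1 - ε)
    (hm₀ver : (fun ω => m₀ (X ω)) =ᵐ[P] P[D | MeasurableSpace.comap X inferInstance])
    (g₀1 g₀0 : 𝓧 → ℝ) (hg₀1 : Measurable g₀1) (hg₀0 : Measurable g₀0)
    (C₀ : ℝ) (hg₀1bd : ∀ x, |g₀1 x| ≤ C₀) (hg₀0bd : ∀ x, |g₀0 x| ≤ C₀)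
    (hg₀1ver : (fun ω => m₀ (X ω) * g₀1 (X ω))
      =ᵐ[P] P[fun ω => D ω * Y ω | MeasurableSpace.comap X inferInstance])
    (hg₀0ver : (fun ω => (1 - m₀ (X ω)) * g₀0 (X ω))
      =ᵐ[P] P[fun ω => (1 - D ω) * Y ω | MeasurableSpace.comap X inferInstance])
    (θ₀ : ℝ) (hθ₀ : θ₀ = ∫ ω, (g₀1 (X ω) - g₀0 (X ω)) ∂P)
    (g1 g0 : 𝓧 → ℝ) (hg1 : Measurable g1) (hg0 : Measurable g0)
    (C₁ : ℝ) (hg1bd : ∀ x, |g1 x| ≤ C₁) (hg0bd : ∀ x, |g0 x| ≤ C₁)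
    (m : 𝓧 → ℝ) (hm : Measurable m) (hmbd : ∀ x, ε ≤ m x ∧ m x ≤ 1 - ε) :
    ∫ ω, ((g1 (X ω) - g0 (X ω)) + (D ω / m (X ω)) * (Y ω - g1 (X ω))
        - ((1 - D ω) / (1 - m (X ω))) * (Y ω - g0 (X ω)) - θ₀) ∂P
      = ∫ ω, (m (X ω) - m₀ (X ω)) *
          ((g1 (X ω) - g₀1 (X ω)) / m (X ω)
            + (g0 (X ω) - g₀0 (X ω)) / (1 - m (X ω))) ∂P := by
  have hmp : ∀ x, 0 < m x := fun x => hε0.trans_le (hmbd x).1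
  have hmp' : ∀ x, 0 < 1 - m x := fun x => by linarith [(hmbd x).2]
  have div1 : ∀ (x : 𝓧) (a C : ℝ), |a| ≤ C → |a / m x| ≤ C / ε := fun x a C h => by
    rw [abs_div, abs_of_pos (hmp x)]
    exact div_le_div₀ ((abs_nonneg a).trans h) h hε0 (hmbd x).1
  have div2 : ∀ (x : 𝓧) (a C : ℝ), |a| ≤ C → |a / (1 - m x)| ≤ C / ε := fun x a C h => by
    rw [abs_div, abs_of_pos (hmp' x)]
    exact div_le_div₀ ((abs_nonneg a).trans h) h hε0 (by linarith [(hmbd x).2])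
  have hDi : Integrable D P := by
    refine Integrable.of_bound hD.aestronglyMeasurable 1 (Filter.Eventually.of_forall fun ω => ?_)
    rcases hD01 ω with h | h <;> simp [h]
  obtain ⟨i1, e1⟩ := aipw_aux P X hX _ hDY _ hg₀1ver (fun x => 1 / m x)
    (measurable_const.div hm) (1 / ε) (fun x => div1 x 1 1 (by simp))
  obtain ⟨i2, e2⟩ := aipw_aux P X hX _ hDY' _ hg₀0ver (fun x => 1 / (1 - m x))
    (measurable_const.div (measurable_const.sub hm)) (1 / ε) (fun x => div2 x 1 1 (by simp))
  obtain ⟨i3, e3⟩ := aipw_aux P X hX _ hDi _ hm₀ver (fun x => g1 x / m x + g0 x / (1 - m x))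
    ((hg1.div hm).add (hg0.div (measurable_const.sub hm))) (C₁ / ε + C₁ / ε)
    (fun x => (abs_add_le _ _).trans
      (add_le_add (div1 x _ _ (hg1bd x)) (div2 x _ _ (hg0bd x))))
  have i4 : Integrable (fun ω => g₀1 (X ω) - g₀0 (X ω)) P := by
    refine Integrable.of_bound ((hg₀1.sub hg₀0).comp hX).aestronglyMeasurable (C₀ + C₀)
      (Filter.Eventually.of_forall fun ω => ?_)
    exact (abs_sub _ _).trans (add_le_add (hg₀1bd _) (hg₀0bd _))
  have i5 : Integrable (fun ω => (m (X ω) - m₀ (X ω)) *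
          ((g1 (X ω) - g₀1 (X ω)) / m (X ω)
            + (g0 (X ω) - g₀0 (X ω)) / (1 - m (X ω)))) P := by
    refine Integrable.of_bound (((hm.sub hm₀).mul (((hg1.sub hg₀1).div hm).add
      ((hg0.sub hg₀0).div (measurable_const.sub hm)))).comp hX).aestronglyMeasurable
      (1 * ((C₁ + C₀) / ε + (C₁ + C₀) / ε))
      (Filter.Eventually.of_forall fun ω => ?_)
    rw [Real.norm_eq_abs, abs_mul]
    refine mul_le_mul ?_ ?_ (abs_nonneg _) zero_le_one
    · rw [abs_le]
      constructor <;> linarith [(hmbd (X ω)).1, (hmbd (X ω)).2, (hm₀bd (X ω)).1, (hm₀bd (X ω)).2]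
    · refine (abs_add_le _ _).trans (add_le_add (div1 _ _ _ ?_) (div2 _ _ _ ?_))
      · exact (abs_sub _ _).trans (add_le_add (hg1bd _) (hg₀1bd _))
      · exact (abs_sub _ _).trans (add_le_add (hg0bd _) (hg₀0bd _))
  rw [integral_congr_ae (Filter.Eventually.of_forall fun ω => ?_),
    integral_sub (((i5.add i1).sub i2).sub i3 |>.add i4) (integrable_const θ₀),
    integral_add' (((i5.add i1).sub i2).sub i3) i4, integral_sub' ((i5.add i1).sub i2) i3,
    integral_sub' (i5.add i1) i2, integral_add' i5 i1, e1, e2, e3, ← hθ₀]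
  · simp
  · have a1 := (hmp (X ω)).ne'
    have a2 := (hmp' (X ω)).ne'
    simp only [Pi.add_apply, Pi.sub_apply]
    field_simp
    ring
end

section
/- (Moment condition and double robustness of the AIPW score.) For all bounded measurable g1, g0 : 𝒳 → ℝ and all measurable m : 𝒳 → ℝ with ε ≤ m ≤ 1 − ε: if m ∘ X = m₀ ∘ X P-almost surely, or if g1 ∘ X = g₀1 ∘ X and g0 ∘ X = g₀0 ∘ X P-almost surely, then E[ψ(g1, g0, m)] = 0. In particular, at the true nuisance functions the moment condition E[ψ(g₀1, g₀0, m₀)] = 0 holds, identifying the average treatment effect θ₀. -/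
open MeasureTheory

lemma aipw_sub {Ω : Type*} [MeasurableSpace Ω] {P : Measure Ω} {f g : Ω → ℝ}
    (hf : Integrable f P) (hg : Integrable g P) : Integrable (fun ω => f ω - g ω) P :=
  hf.sub hg

/-- Pull-out: testing against a bounded function of `X`. -/
lemma aipw_pull {Ω 𝓧 : Type*} [MeasurableSpace Ω] [MeasurableSpace 𝓧]
    (P : Measure Ω) [IsProbabilityMeasure P]
    (X : Ω → 𝓧) (hX : Measurable X) (Z : Ω → ℝ) (hZ : Integrable Z P)
    (v : Ω → ℝ) (hv : v =ᵐ[P] P[Z | MeasurableSpace.comap X inferInstance])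
    (h : 𝓧 → ℝ) (hh : Measurable h) (C : ℝ) (hC : ∀ x, |h x| ≤ C) :
    Integrable (fun ω => h (X ω) * Z ω) P ∧ Integrable (fun ω => h (X ω) * v ω) P ∧
      ∫ ω, h (X ω) * Z ω ∂P = ∫ ω, h (X ω) * v ω ∂P := by
  have hle : MeasurableSpace.comap X inferInstance ≤ (inferInstance : MeasurableSpace Ω) :=
    hX.comap_le
  have hsm : StronglyMeasurable[MeasurableSpace.comap X inferInstance] (fun ω => h (X ω)) :=
    (hh.comp (comap_measurable X)).stronglyMeasurable
  have hbd : ∀ᵐ ω ∂P, ‖h (X ω)‖ ≤ C := Filter.Eventually.of_forall fun ω => hC (X ω)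
  have hvi : Integrable v P := integrable_condExp.congr hv.symm
  have i1 : Integrable (fun ω => h (X ω) * Z ω) P :=
    hZ.bdd_mul (hh.comp hX).aestronglyMeasurable hbd
  have i2 : Integrable (fun ω => h (X ω) * v ω) P :=
    hvi.bdd_mul (hh.comp hX).aestronglyMeasurable hbd
  refine ⟨i1, i2, ?_⟩
  have key := condExp_mul_of_stronglyMeasurable_left (μ := P) hsm i1 hZ
  rw [← integral_condExp hle]
  apply integral_congr_ae
  filter_upwards [key, hv] with ω h1 h2
  rw [h2]
  exact h1

/-- One arm of the AIPW score. -/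
lemma aipw_arm {Ω 𝓧 : Type*} [MeasurableSpace Ω] [MeasurableSpace 𝓧]
    (P : Measure Ω) [IsProbabilityMeasure P]
    (X : Ω → 𝓧) (hX : Measurable X) (D Y : Ω → ℝ) (hD : Integrable D P)
    (hDY : Integrable (fun ω => D ω * Y ω) P)
    (ε : ℝ) (hε0 : 0 < ε)
    (m₀ g₀ g m : 𝓧 → ℝ) (hm₀bd : ∀ x, ε ≤ m₀ x)
    (hm₀ver : (fun ω => m₀ (X ω)) =ᵐ[P] P[D | MeasurableSpace.comap X inferInstance])
    (hver : (fun ω => m₀ (X ω) * g₀ (X ω))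
      =ᵐ[P] P[fun ω => D ω * Y ω | MeasurableSpace.comap X inferInstance])
    (hg : Measurable g) (C : ℝ) (hgbd : ∀ x, |g x| ≤ C)
    (hm : Measurable m) (hmbd : ∀ x, ε ≤ m x)
    (hor : (fun ω => m (X ω)) =ᵐ[P] (fun ω => m₀ (X ω)) ∨
      (fun ω => g (X ω)) =ᵐ[P] (fun ω => g₀ (X ω))) :
    Integrable (fun ω => g (X ω) + (D ω / m (X ω)) * (Y ω - g (X ω))) P ∧
      ∫ ω, (g (X ω) + (D ω / m (X ω)) * (Y ω - g (X ω))) ∂P = ∫ ω, g₀ (X ω) ∂P := by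
  have hinv : ∀ x, |(m x)⁻¹| ≤ ε⁻¹ := fun x => by
    rw [abs_of_pos (inv_pos.2 (hε0.trans_le (hmbd x)))]
    exact inv_anti₀ hε0 (hmbd x)
  obtain ⟨a1, a2, a3⟩ := aipw_pull P X hX _ hDY _ hver (fun x => (m x)⁻¹) hm.inv _ hinv
  obtain ⟨b1, b2, b3⟩ := aipw_pull P X hX _ hD _ hm₀ver (fun x => g x * (m x)⁻¹)
    (hg.mul hm.inv) (C * ε⁻¹) (fun x => by
      rw [abs_mul]
      exact mul_le_mul (hgbd x) (hinv x) (abs_nonneg _) ((abs_nonneg _).trans (hgbd x)))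
  have gi : Integrable (fun ω => g (X ω)) P :=
    Integrable.of_bound (hg.comp hX).aestronglyMeasurable C
      (Filter.Eventually.of_forall fun ω => hgbd (X ω))
  have e : (fun ω => g (X ω) + (D ω / m (X ω)) * (Y ω - g (X ω))) =
      fun ω => g (X ω) + ((m (X ω))⁻¹ * (D ω * Y ω) - g (X ω) * (m (X ω))⁻¹ * D ω) := by
    funext ω
    rw [div_eq_mul_inv]
    ring
  rw [e]
  refine ⟨gi.add (a1.sub b1), ?_⟩
  rw [integral_add gi (aipw_sub a1 b1), integral_sub a1 b1, a3, b3, ← integral_sub a2 b2,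
    ← integral_add gi (aipw_sub a2 b2)]
  apply integral_congr_ae
  rcases hor with h | h
  · filter_upwards [h] with ω hω
    have := (hε0.trans_le (hm₀bd (X ω))).ne'
    simp only [hω]
    field_simp
    ring
  · filter_upwards [h] with ω hω
    simp only [hω]
    ring

/-- Moment condition and double robustness of the AIPW score: if either the propensity
score or both outcome regressions are correctly specified (a.s.), the expected AIPW score
is zero; in particular it is zero at the true nuisance functions. -/
theorem aipw_double_robustness
    {Ω 𝓧 : Type*} [MeasurableSpace Ω] [MeasurableSpace 𝓧]
    (P : MeasureTheory.Measure Ω) [MeasureTheory.IsProbabilityMeasure P]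
    (X : Ω → 𝓧) (hX : Measurable X)
    (D : Ω → ℝ) (hD : Measurable D) (hD01 : ∀ ω, D ω = 0 ∨ D ω = 1)
    (Y : Ω → ℝ) (hY : MeasureTheory.Integrable Y P)
    (hDY : MeasureTheory.Integrable (fun ω => D ω * Y ω) P)
    (hDY' : MeasureTheory.Integrable (fun ω => (1 - D ω) * Y ω) P)
    (ε : ℝ) (hε0 : 0 < ε) (hε : ε < 1 / 2)
    (m₀ : 𝓧 → ℝ) (hm₀ : Measurable m₀)
    (hm₀bd : ∀ x, ε ≤ m₀ x ∧ m₀ x ≤ 1 - ε)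
    (hm₀ver : (fun ω => m₀ (X ω)) =ᵐ[P] P[D | MeasurableSpace.comap X inferInstance])
    (g₀1 g₀0 : 𝓧 → ℝ) (hg₀1 : Measurable g₀1) (hg₀0 : Measurable g₀0)
    (C₀ : ℝ) (hg₀1bd : ∀ x, |g₀1 x| ≤ C₀) (hg₀0bd : ∀ x, |g₀0 x| ≤ C₀)
    (hg₀1ver : (fun ω => m₀ (X ω) * g₀1 (X ω))
      =ᵐ[P] P[fun ω => D ω * Y ω | MeasurableSpace.comap X inferInstance])
    (hg₀0ver : (fun ω => (1 - m₀ (X ω)) * g₀0 (X ω))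
      =ᵐ[P] P[fun ω => (1 - D ω) * Y ω | MeasurableSpace.comap X inferInstance])
    (θ₀ : ℝ) (hθ₀ : θ₀ = ∫ ω, (g₀1 (X ω) - g₀0 (X ω)) ∂P)
    (g1 g0 : 𝓧 → ℝ) (hg1 : Measurable g1) (hg0 : Measurable g0)
    (C₁ : ℝ) (hg1bd : ∀ x, |g1 x| ≤ C₁) (hg0bd : ∀ x, |g0 x| ≤ C₁)
    (m : 𝓧 → ℝ) (hm : Measurable m) (hmbd : ∀ x, ε ≤ m x ∧ m x ≤ 1 - ε) :
    (((fun ω => m (X ω)) =ᵐ[P] (fun ω => m₀ (X ω)) ∨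
      ((fun ω => g1 (X ω)) =ᵐ[P] (fun ω => g₀1 (X ω)) ∧
        (fun ω => g0 (X ω)) =ᵐ[P] (fun ω => g₀0 (X ω)))) →
      ∫ ω, ((g1 (X ω) - g0 (X ω)) + (D ω / m (X ω)) * (Y ω - g1 (X ω))
          - ((1 - D ω) / (1 - m (X ω))) * (Y ω - g0 (X ω)) - θ₀) ∂P = 0) ∧
    ∫ ω, ((g₀1 (X ω) - g₀0 (X ω)) + (D ω / m₀ (X ω)) * (Y ω - g₀1 (X ω))
        - ((1 - D ω) / (1 - m₀ (X ω))) * (Y ω - g₀0 (X ω)) - θ₀) ∂P = 0 := by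
  have hDi : Integrable D P := Integrable.of_bound hD.aestronglyMeasurable 1
    (Filter.Eventually.of_forall fun ω => by rcases hD01 ω with h | h <;> simp [h])
  have hle : MeasurableSpace.comap X inferInstance ≤ (inferInstance : MeasurableSpace Ω) :=
    hX.comap_le
  have hD'i : Integrable (fun ω => 1 - D ω) P := (integrable_const 1).sub hDi
  have hver' : (fun ω => 1 - m₀ (X ω))
      =ᵐ[P] P[fun ω => 1 - D ω | MeasurableSpace.comap X inferInstance] := by
    have h1 := condExp_sub (μ := P) (integrable_const (1 : ℝ)) hDi
      (MeasurableSpace.comap X inferInstance)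
    rw [condExp_const hle] at h1
    filter_upwards [h1, hm₀ver] with ω k1 k2
    rw [k2]
    exact k1.symm
  have i1 : Integrable (fun ω => g₀1 (X ω)) P :=
    Integrable.of_bound (hg₀1.comp hX).aestronglyMeasurable C₀
      (Filter.Eventually.of_forall fun ω => hg₀1bd (X ω))
  have i0 : Integrable (fun ω => g₀0 (X ω)) P :=
    Integrable.of_bound (hg₀0.comp hX).aestronglyMeasurable C₀
      (Filter.Eventually.of_forall fun ω => hg₀0bd (X ω))
  have main : ∀ (g1 g0 m : 𝓧 → ℝ) (C : ℝ), Measurable g1 → Measurable g0 →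
      (∀ x, |g1 x| ≤ C) → (∀ x, |g0 x| ≤ C) → Measurable m →
      (∀ x, ε ≤ m x ∧ m x ≤ 1 - ε) →
      ((fun ω => m (X ω)) =ᵐ[P] (fun ω => m₀ (X ω)) ∨
      ((fun ω => g1 (X ω)) =ᵐ[P] (fun ω => g₀1 (X ω)) ∧
        (fun ω => g0 (X ω)) =ᵐ[P] (fun ω => g₀0 (X ω)))) →
      ∫ ω, ((g1 (X ω) - g0 (X ω)) + (D ω / m (X ω)) * (Y ω - g1 (X ω))
          - ((1 - D ω) / (1 - m (X ω))) * (Y ω - g0 (X ω)) - θ₀) ∂P = 0 := by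
    intro g1 g0 m C hg1 hg0 b1 b0 hm hmbd hor
    obtain ⟨p1, p2⟩ := aipw_arm P X hX D Y hDi hDY ε hε0 m₀ g₀1 g1 m (fun x => (hm₀bd x).1)
      hm₀ver hg₀1ver hg1 C b1 hm (fun x => (hmbd x).1) (hor.imp id And.left)
    obtain ⟨q1, q2⟩ := aipw_arm P X hX (fun ω => 1 - D ω) Y hD'i hDY' ε hε0
      (fun x => 1 - m₀ x) g₀0 g0 (fun x => 1 - m x) (fun x => by linarith [(hm₀bd x).2])
      hver' hg₀0ver hg0 C b0 (measurable_const.sub hm) (fun x => by linarith [(hmbd x).2])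
      (hor.imp (fun h => by filter_upwards [h] with ω hω; rw [hω]) And.right)
    have e : (fun ω => (g1 (X ω) - g0 (X ω)) + (D ω / m (X ω)) * (Y ω - g1 (X ω))
          - ((1 - D ω) / (1 - m (X ω))) * (Y ω - g0 (X ω)) - θ₀) =
        fun ω => ((g1 (X ω) + (D ω / m (X ω)) * (Y ω - g1 (X ω))) -
          (g0 (X ω) + ((1 - D ω) / (1 - m (X ω))) * (Y ω - g0 (X ω)))) - θ₀ := by
      funext ω
      ring
    rw [e, integral_sub (aipw_sub p1 q1) (integrable_const θ₀), integral_sub p1 q1, p2, q2, hθ₀,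
      integral_sub i1 i0]
    simp
  exact ⟨main g1 g0 m C₁ hg1 hg0 hg1bd hg0bd hm hmbd,
    main g₀1 g₀0 m₀ C₀ hg₀1 hg₀0 hg₀1bd hg₀0bd hm₀ hm₀bd (Or.inl Filter.EventuallyEq.rfl)⟩
end

section
/- (Product-rate bias bound for the AIPW score.) For all bounded measurable g1, g0 : 𝒳 → ℝ and all measurable m : 𝒳 → ℝ with ε ≤ m ≤ 1 − ε, the expected AIPW score satisfies |E[ψ(g1, g0, m)]| ≤ ε^{-1} · ‖(m − m₀) ∘ X‖_{L²(P)} · (‖(g1 − g₀1) ∘ X‖_{L²(P)} + ‖(g0 − g₀0) ∘ X‖_{L²(P)}); i.e. the bias is controlled by the product of the L² estimation errors of the propensity score and the outcome regressions. -/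
open MeasureTheory

theorem aipw_aux_sum {Ω : Type*} [MeasurableSpace Ω] (P : Measure Ω)
    {a b c d e f g : Ω → ℝ} (ha : Integrable a P) (hb : Integrable b P) (hc : Integrable c P)
    (hd : Integrable d P) (he : Integrable e P) (hf : Integrable f P) (hg : Integrable g P) :
    ∫ ω, (a ω - b ω - c ω - d ω + e ω + f ω + g ω) ∂P =
      ∫ ω, a ω ∂P - ∫ ω, b ω ∂P - ∫ ω, c ω ∂P - ∫ ω, d ω ∂P + ∫ ω, e ω ∂P + ∫ ω, f ω ∂P
        + ∫ ω, g ω ∂P := by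
  have h1 := ha.sub hb
  have h2 := h1.sub hc
  have h3 := h2.sub hd
  have h4 := h3.add he
  have h5 := h4.add hf
  rw [← integral_sub' ha hb, ← integral_sub' h1 hc, ← integral_sub' h2 hd,
    ← integral_add' h3 he, ← integral_add' h4 hf, ← integral_add' h5 hg]
  rfl

theorem aipw_aux_zero {Ω 𝓧 : Type*} [MeasurableSpace Ω] [MeasurableSpace 𝓧]
    (P : Measure Ω) [IsProbabilityMeasure P] (X : Ω → 𝓧) (hX : Measurable X)
    (Z : Ω → ℝ) (hZ : Integrable Z P) (k : 𝓧 → ℝ)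
    (hk : (fun ω => k (X ω)) =ᵐ[P] P[Z | MeasurableSpace.comap X inferInstance])
    (h : 𝓧 → ℝ) (hh : Measurable h) (C : ℝ) (hC : ∀ x, |h x| ≤ C) :
    Integrable (fun ω => h (X ω) * (Z ω - k (X ω))) P ∧
      ∫ ω, h (X ω) * (Z ω - k (X ω)) ∂P = 0 := by
  have hkI : Integrable (fun ω => k (X ω)) P := integrable_condExp.congr hk.symm
  have hb : ∀ W : Ω → ℝ, Integrable W P → Integrable (fun ω => h (X ω) * W ω) P := by
    intro W hW
    exact hW.bdd_mul (c := C) (hh.comp hX).aestronglyMeasurable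
      (Filter.Eventually.of_forall fun ω => by simpa using hC (X ω))
  refine ⟨hb _ (hZ.sub hkI), ?_⟩
  have e : ∀ ω, h (X ω) * (Z ω - k (X ω)) = h (X ω) * Z ω - h (X ω) * k (X ω) :=
    fun ω => by ring
  simp_rw [e]
  rw [integral_sub (hb _ hZ) (hb _ hkI), sub_eq_zero]
  have hm : MeasurableSpace.comap X inferInstance ≤ (inferInstance : MeasurableSpace Ω) :=
    hX.comap_le
  have hs : StronglyMeasurable[MeasurableSpace.comap X inferInstance] (fun ω => h (X ω)) :=
    (hh.comp (comap_measurable X)).stronglyMeasurable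
  have key := condExp_mul_of_stronglyMeasurable_left (μ := P) hs (hb _ hZ) hZ
  rw [← integral_condExp hm (f := fun ω => h (X ω) * Z ω)]
  apply integral_congr_ae
  filter_upwards [key, hk] with ω h1 h2
  rw [h2]
  exact h1

theorem aipw_aux_cs {Ω : Type*} [MeasurableSpace Ω]
    (P : Measure Ω) [IsProbabilityMeasure P] (w a b : Ω → ℝ)
    (hw : Measurable w) (ha : Measurable a) (hb : Measurable b)
    (c A B : ℝ) (hwc : ∀ ω, |w ω| ≤ c) (haA : ∀ ω, |a ω| ≤ A) (hbB : ∀ ω, |b ω| ≤ B) :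
    Integrable (fun ω => w ω * a ω * b ω) P ∧
    |∫ ω, w ω * a ω * b ω ∂P| ≤ c * Real.sqrt (∫ ω, a ω ^ 2 ∂P) * Real.sqrt (∫ ω, b ω ^ 2 ∂P) := by
  have la : MemLp a 2 P := MemLp.of_bound ha.aestronglyMeasurable A
    (Filter.Eventually.of_forall fun ω => by simpa using haA ω)
  have lb : MemLp b 2 P := MemLp.of_bound hb.aestronglyMeasurable B
    (Filter.Eventually.of_forall fun ω => by simpa using hbB ω)
  have iab : Integrable (fun ω => a ω * b ω) P := la.integrable_mul lb
  have iw : Integrable (fun ω => w ω * a ω * b ω) P := by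
    simp_rw [mul_assoc]
    exact iab.bdd_mul (c := c) hw.aestronglyMeasurable
      (Filter.Eventually.of_forall fun ω => by simpa using hwc ω)
  refine ⟨iw, ?_⟩
  obtain ⟨ω₀⟩ : Nonempty Ω := P.nonempty_of_neZero
  have hc : 0 ≤ c := (abs_nonneg _).trans (hwc ω₀)
  have h1 : |∫ ω, w ω * a ω * b ω ∂P| ≤ c * ∫ ω, |a ω| * |b ω| ∂P := by
    rw [← integral_const_mul]
    refine (abs_integral_le_integral_abs).trans (integral_mono iw.abs ?_ ?_)
    · have := iab.abs.const_mul c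
      simpa [abs_mul] using this
    · intro ω
      simp only [abs_mul, mul_assoc]
      exact mul_le_mul_of_nonneg_right (hwc ω) (by positivity)
  have h2 : ∫ ω, |a ω| * |b ω| ∂P ≤ Real.sqrt (∫ ω, a ω ^ 2 ∂P) * Real.sqrt (∫ ω, b ω ^ 2 ∂P) := by
    have := integral_mul_le_Lp_mul_Lq_of_nonneg (μ := P) (f := fun ω => |a ω|)
      (g := fun ω => |b ω|) (p := 2) (q := 2) Real.HolderConjugate.two_two
      (Filter.Eventually.of_forall fun ω => abs_nonneg _)
      (Filter.Eventually.of_forall fun ω => abs_nonneg _)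
      (by rw [ENNReal.ofReal_ofNat]; exact la.abs) (by rw [ENNReal.ofReal_ofNat]; exact lb.abs)
    simpa [Real.sqrt_eq_rpow] using this
  rw [mul_assoc]
  exact h1.trans (mul_le_mul_of_nonneg_left h2 hc)

/-- Product-rate bias bound for the AIPW score: the bias is controlled by the product of
the L² estimation errors of the propensity score and the outcome regressions. -/
theorem aipw_product_rate_bias_bound
    {Ω 𝓧 : Type*} [MeasurableSpace Ω] [MeasurableSpace 𝓧]
    (P : MeasureTheory.Measure Ω) [MeasureTheory.IsProbabilityMeasure P]
    (X : Ω → 𝓧) (hX : Measurable X)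
    (D : Ω → ℝ) (hD : Measurable D) (hD01 : ∀ ω, D ω = 0 ∨ D ω = 1)
    (Y : Ω → ℝ) (hY : MeasureTheory.Integrable Y P)
    (hDY : MeasureTheory.Integrable (fun ω => D ω * Y ω) P)
    (hDY' : MeasureTheory.Integrable (fun ω => (1 - D ω) * Y ω) P)
    (ε : ℝ) (hε0 : 0 < ε) (hε : ε < 1 / 2)
    (m₀ : 𝓧 → ℝ) (hm₀ : Measurable m₀)
    (hm₀bd : ∀ x, ε ≤ m₀ x ∧ m₀ x ≤ 1 - ε)
    (hm₀ver : (fun ω => m₀ (X ω)) =ᵐ[P] P[D | MeasurableSpace.comap X inferInstance])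
    (g₀1 g₀0 : 𝓧 → ℝ) (hg₀1 : Measurable g₀1) (hg₀0 : Measurable g₀0)
    (C₀ : ℝ) (hg₀1bd : ∀ x, |g₀1 x| ≤ C₀) (hg₀0bd : ∀ x, |g₀0 x| ≤ C₀)
    (hg₀1ver : (fun ω => m₀ (X ω) * g₀1 (X ω))
      =ᵐ[P] P[fun ω => D ω * Y ω | MeasurableSpace.comap X inferInstance])
    (hg₀0ver : (fun ω => (1 - m₀ (X ω)) * g₀0 (X ω))
      =ᵐ[P] P[fun ω => (1 - D ω) * Y ω | MeasurableSpace.comap X inferInstance])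
    (θ₀ : ℝ) (hθ₀ : θ₀ = ∫ ω, (g₀1 (X ω) - g₀0 (X ω)) ∂P)
    (g1 g0 : 𝓧 → ℝ) (hg1 : Measurable g1) (hg0 : Measurable g0)
    (C₁ : ℝ) (hg1bd : ∀ x, |g1 x| ≤ C₁) (hg0bd : ∀ x, |g0 x| ≤ C₁)
    (m : 𝓧 → ℝ) (hm : Measurable m) (hmbd : ∀ x, ε ≤ m x ∧ m x ≤ 1 - ε) :
    |∫ ω, ((g1 (X ω) - g0 (X ω)) + (D ω / m (X ω)) * (Y ω - g1 (X ω))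
        - ((1 - D ω) / (1 - m (X ω))) * (Y ω - g0 (X ω)) - θ₀) ∂P|
      ≤ ε⁻¹ * Real.sqrt (∫ ω, (m (X ω) - m₀ (X ω)) ^ 2 ∂P) *
          (Real.sqrt (∫ ω, (g1 (X ω) - g₀1 (X ω)) ^ 2 ∂P)
            + Real.sqrt (∫ ω, (g0 (X ω) - g₀0 (X ω)) ^ 2 ∂P)) := by
  have hmX := hm.comp hX
  have m_pos : ∀ x, 0 < m x := fun x => hε0.trans_le (hmbd x).1
  have m_pos' : ∀ x, 0 < 1 - m x := fun x => by linarith [(hmbd x).2]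
  have bi : ∀ x, |(m x)⁻¹| ≤ ε⁻¹ := fun x => by
    rw [abs_of_pos (inv_pos.2 (m_pos x))]
    exact inv_anti₀ hε0 (hmbd x).1
  have bi' : ∀ x, |(1 - m x)⁻¹| ≤ ε⁻¹ := fun x => by
    rw [abs_of_pos (inv_pos.2 (m_pos' x))]
    exact inv_anti₀ hε0 (by linarith [(hmbd x).2])
  have hε' : 0 ≤ ε⁻¹ := (inv_pos.2 hε0).le
  have hDi : Integrable D P := Integrable.of_bound hD.aestronglyMeasurable 1
    (Filter.Eventually.of_forall fun ω => by rcases hD01 ω with h | h <;> simp [h])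
  obtain ⟨I1, E1⟩ := aipw_aux_zero P X hX _ hDY (fun x => m₀ x * g₀1 x) hg₀1ver
    (fun x => (m x)⁻¹) hm.inv ε⁻¹ bi
  obtain ⟨I2, E2⟩ := aipw_aux_zero P X hX _ hDY' (fun x => (1 - m₀ x) * g₀0 x) hg₀0ver
    (fun x => (1 - m x)⁻¹) (measurable_const.sub hm).inv ε⁻¹ bi'
  obtain ⟨I3, E3⟩ := aipw_aux_zero P X hX D hDi m₀ hm₀ver
    (fun x => (m x)⁻¹ * g1 x) (hm.inv.mul hg1) (ε⁻¹ * C₁) (fun x => by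
      rw [abs_mul]; exact mul_le_mul (bi x) (hg1bd x) (abs_nonneg _) hε')
  obtain ⟨I4, E4⟩ := aipw_aux_zero P X hX D hDi m₀ hm₀ver
    (fun x => (1 - m x)⁻¹ * g0 x) ((measurable_const.sub hm).inv.mul hg0) (ε⁻¹ * C₁) (fun x => by
      rw [abs_mul]; exact mul_le_mul (bi' x) (hg0bd x) (abs_nonneg _) hε')
  have bm : ∀ ω, |m (X ω) - m₀ (X ω)| ≤ 1 := fun ω => by
    rw [abs_le]
    have := hmbd (X ω); have := hm₀bd (X ω)
    constructor <;> linarith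
  obtain ⟨J1, K1⟩ := aipw_aux_cs P (fun ω => (m (X ω))⁻¹) (fun ω => m (X ω) - m₀ (X ω))
    (fun ω => g1 (X ω) - g₀1 (X ω)) (hm.inv.comp hX) ((hm.sub hm₀).comp hX)
    ((hg1.sub hg₀1).comp hX) ε⁻¹ 1 (C₁ + C₀) (fun ω => bi _) bm
    (fun ω => (abs_sub _ _).trans (add_le_add (hg1bd _) (hg₀1bd _)))
  obtain ⟨J0, K0⟩ := aipw_aux_cs P (fun ω => (1 - m (X ω))⁻¹) (fun ω => m (X ω) - m₀ (X ω))
    (fun ω => g0 (X ω) - g₀0 (X ω)) ((measurable_const.sub hm).inv.comp hX)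
    ((hm.sub hm₀).comp hX)
    ((hg0.sub hg₀0).comp hX) ε⁻¹ 1 (C₁ + C₀) (fun ω => bi' _) bm
    (fun ω => (abs_sub _ _).trans (add_le_add (hg0bd _) (hg₀0bd _)))
  have IG : Integrable (fun ω => g₀1 (X ω) - g₀0 (X ω)) P :=
    Integrable.of_bound ((hg₀1.sub hg₀0).comp hX).aestronglyMeasurable (C₀ + C₀)
    (Filter.Eventually.of_forall fun ω =>
      (abs_sub _ _).trans (add_le_add (hg₀1bd _) (hg₀0bd _)))
  have IGθ : Integrable (fun ω => g₀1 (X ω) - g₀0 (X ω) - θ₀) P := IG.sub (integrable_const _)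
  have EG : ∫ ω, (g₀1 (X ω) - g₀0 (X ω) - θ₀) ∂P = 0 := by
    rw [integral_sub IG (integrable_const _), ← hθ₀]; simp
  have pt : ∀ ω, ((g1 (X ω) - g0 (X ω)) + (D ω / m (X ω)) * (Y ω - g1 (X ω))
        - ((1 - D ω) / (1 - m (X ω))) * (Y ω - g0 (X ω)) - θ₀) =
      (m (X ω))⁻¹ * (D ω * Y ω - m₀ (X ω) * g₀1 (X ω))
      - (1 - m (X ω))⁻¹ * ((1 - D ω) * Y ω - (1 - m₀ (X ω)) * g₀0 (X ω))
      - (m (X ω))⁻¹ * g1 (X ω) * (D ω - m₀ (X ω))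
      - (1 - m (X ω))⁻¹ * g0 (X ω) * (D ω - m₀ (X ω))
      + (m (X ω))⁻¹ * (m (X ω) - m₀ (X ω)) * (g1 (X ω) - g₀1 (X ω))
      + (1 - m (X ω))⁻¹ * (m (X ω) - m₀ (X ω)) * (g0 (X ω) - g₀0 (X ω))
      + (g₀1 (X ω) - g₀0 (X ω) - θ₀) := by
    intro ω
    have h1 := (m_pos (X ω)).ne'
    have h2 := (m_pos' (X ω)).ne'
    field_simp
    ring
  simp_rw [pt]
  rw [aipw_aux_sum P I1 I2 I3 I4 J1 J0 IGθ, E1, E2, E3, E4, EG]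
  simp only [sub_zero, zero_add, add_zero]
  rw [mul_add]
  exact (abs_add_le _ _).trans (add_le_add K1 K0)
end

section
/- (Neyman near-orthogonality of the AIPW score along linear nuisance paths.) Let g1, g0 : 𝒳 → ℝ be bounded measurable and m : 𝒳 → ℝ measurable with ε ≤ m ≤ 1 − ε. For r ∈ [0,1] define the path nuisances m_r := m₀ + r(m − m₀), g1_r := g₀1 + r(g1 − g₀1), g0_r := g₀0 + r(g0 − g₀0) (note ε ≤ m_r ≤ 1 − ε). Then for every r ∈ [0,1], E[ψ(g1_r, g0_r, m_r)] = r² · E[(m(X) − m₀(X)) · ((g1(X) − g₀1(X)) / m_r(X) + (g0(X) − g₀0(X)) / (1 − m_r(X)))]; consequently |E[ψ(g1_r, g0_r, m_r)]| ≤ r² · ε^{-1} · ‖(m − m₀) ∘ X‖_{L²(P)} · (‖(g1 − g₀1) ∘ X‖_{L²(P)} + ‖(g0 − g₀0) ∘ X‖_{L²(P)}), so the map r ↦ E[ψ(g1_r, g0_r, m_r)] vanishes to second order at r = 0. -/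
open MeasureTheory

/-- Bounded measurable functions of `X` are integrable. -/
lemma aipw_integrable_comp {Ω 𝓧 : Type*} [MeasurableSpace Ω] [MeasurableSpace 𝓧]
    (P : Measure Ω) [IsProbabilityMeasure P] (X : Ω → 𝓧) (hX : Measurable X)
    (h : 𝓧 → ℝ) (hh : Measurable h) (C : ℝ) (hC : ∀ x, |h x| ≤ C) :
    Integrable (fun ω => h (X ω)) P :=
  Integrable.of_bound (hh.comp hX).aestronglyMeasurable C
    (Filter.Eventually.of_forall fun ω => by simpa using hC (X ω))

/-- Conditional-expectation orthogonality. -/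
lemma aipw_orth {Ω 𝓧 : Type*} [MeasurableSpace Ω] [MeasurableSpace 𝓧]
    (P : Measure Ω) [IsProbabilityMeasure P] (X : Ω → 𝓧) (hX : Measurable X)
    (Z : Ω → ℝ) (hZ : Integrable Z P) (c : Ω → ℝ)
    (hc : c =ᵐ[P] P[Z | MeasurableSpace.comap X inferInstance])
    (h : 𝓧 → ℝ) (hh : Measurable h) (C : ℝ) (hC : ∀ x, |h x| ≤ C) :
    Integrable (fun ω => h (X ω) * (Z ω - c ω)) P ∧
      ∫ ω, h (X ω) * (Z ω - c ω) ∂P = 0 := by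
  have hle : MeasurableSpace.comap X inferInstance ≤ (inferInstance : MeasurableSpace Ω) :=
    hX.comap_le
  have hsm : StronglyMeasurable[MeasurableSpace.comap X inferInstance] (fun ω => h (X ω)) :=
    (hh.comp (comap_measurable X)).stronglyMeasurable
  have hb : ∀ᵐ ω ∂P, ‖h (X ω)‖ ≤ C :=
    Filter.Eventually.of_forall fun ω => by simpa using hC (X ω)
  have hae : AEStronglyMeasurable (fun ω => h (X ω)) P := (hh.comp hX).aestronglyMeasurable
  have hci : Integrable c P := integrable_condExp.congr hc.symm
  have i1 : Integrable (fun ω => h (X ω) * Z ω) P := hZ.bdd_mul hae hb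
  have i2 : Integrable (fun ω => h (X ω) * c ω) P := hci.bdd_mul hae hb
  have e1 : ∫ ω, h (X ω) * Z ω ∂P = ∫ ω, h (X ω) * c ω ∂P := by
    rw [← integral_condExp (μ := P) (f := fun ω => h (X ω) * Z ω) hle]
    apply integral_congr_ae
    have := condExp_mul_of_stronglyMeasurable_left (μ := P) hsm (g := Z) i1 hZ
    filter_upwards [this, hc] with ω h1 h2
    rw [h2]
    exact h1
  have e : (fun ω => h (X ω) * (Z ω - c ω)) = fun ω => h (X ω) * Z ω - h (X ω) * c ω := by
    funext ω; ring
  rw [e]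
  refine ⟨i1.sub i2, ?_⟩
  rw [integral_sub i1 i2, e1, sub_self]

/-- Cauchy-Schwarz for bounded functions. -/
lemma aipw_cs {Ω : Type*} [MeasurableSpace Ω] (P : Measure Ω) [IsProbabilityMeasure P]
    (f g : Ω → ℝ) (hf : Measurable f) (hg : Measurable g) (A B : ℝ)
    (hA : ∀ ω, |f ω| ≤ A) (hB : ∀ ω, |g ω| ≤ B) :
    ∫ ω, |f ω| * |g ω| ∂P ≤ Real.sqrt (∫ ω, f ω ^ 2 ∂P) * Real.sqrt (∫ ω, g ω ^ 2 ∂P) := by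
  have mf : MemLp f (ENNReal.ofReal 2) P :=
    MemLp.of_bound hf.aestronglyMeasurable A (Filter.Eventually.of_forall hA)
  have mg : MemLp g (ENNReal.ofReal 2) P :=
    MemLp.of_bound hg.aestronglyMeasurable B (Filter.Eventually.of_forall hB)
  have := integral_mul_norm_le_Lp_mul_Lq (μ := P) Real.HolderConjugate.two_two mf mg
  simpa [Real.sqrt_eq_rpow] using this

/-- A bounded function over a function bounded below by `ε`. -/
lemma aipw_div_bd {a M ε C : ℝ} (hε : 0 < ε) (hM : ε ≤ M) (ha : |a| ≤ C) :
    |a / M| ≤ ε⁻¹ * C := by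
  have : 0 < M := hε.trans_le hM
  rw [abs_div, abs_of_pos this, div_eq_inv_mul]
  gcongr

/-- Neyman near-orthogonality of the AIPW score along linear nuisance paths: the expected
score along the path vanishes to second order at `r = 0`. -/
theorem aipw_neyman_orthogonality_path
    {Ω 𝓧 : Type*} [MeasurableSpace Ω] [MeasurableSpace 𝓧]
    (P : MeasureTheory.Measure Ω) [MeasureTheory.IsProbabilityMeasure P]
    (X : Ω → 𝓧) (hX : Measurable X)
    (D : Ω → ℝ) (hD : Measurable D) (hD01 : ∀ ω, D ω = 0 ∨ D ω = 1)
    (Y : Ω → ℝ) (hY : MeasureTheory.Integrable Y P)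
    (hDY : MeasureTheory.Integrable (fun ω => D ω * Y ω) P)
    (hDY' : MeasureTheory.Integrable (fun ω => (1 - D ω) * Y ω) P)
    (ε : ℝ) (hε0 : 0 < ε) (hε : ε < 1 / 2)
    (m₀ : 𝓧 → ℝ) (hm₀ : Measurable m₀)
    (hm₀bd : ∀ x, ε ≤ m₀ x ∧ m₀ x ≤ 1 - ε)
    (hm₀ver : (fun ω => m₀ (X ω)) =ᵐ[P] P[D | MeasurableSpace.comap X inferInstance])
    (g₀1 g₀0 : 𝓧 → ℝ) (hg₀1 : Measurable g₀1) (hg₀0 : Measurable g₀0)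
    (C₀ : ℝ) (hg₀1bd : ∀ x, |g₀1 x| ≤ C₀) (hg₀0bd : ∀ x, |g₀0 x| ≤ C₀)
    (hg₀1ver : (fun ω => m₀ (X ω) * g₀1 (X ω))
      =ᵐ[P] P[fun ω => D ω * Y ω | MeasurableSpace.comap X inferInstance])
    (hg₀0ver : (fun ω => (1 - m₀ (X ω)) * g₀0 (X ω))
      =ᵐ[P] P[fun ω => (1 - D ω) * Y ω | MeasurableSpace.comap X inferInstance])
    (θ₀ : ℝ) (hθ₀ : θ₀ = ∫ ω, (g₀1 (X ω) - g₀0 (X ω)) ∂P)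
    (g1 g0 : 𝓧 → ℝ) (hg1 : Measurable g1) (hg0 : Measurable g0)
    (C₁ : ℝ) (hg1bd : ∀ x, |g1 x| ≤ C₁) (hg0bd : ∀ x, |g0 x| ≤ C₁)
    (m : 𝓧 → ℝ) (hm : Measurable m) (hmbd : ∀ x, ε ≤ m x ∧ m x ≤ 1 - ε) :
    ∀ r : ℝ, 0 ≤ r → r ≤ 1 →
      (∫ ω, (((g₀1 (X ω) + r * (g1 (X ω) - g₀1 (X ω)))
              - (g₀0 (X ω) + r * (g0 (X ω) - g₀0 (X ω))))
          + (D ω / (m₀ (X ω) + r * (m (X ω) - m₀ (X ω))))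
              * (Y ω - (g₀1 (X ω) + r * (g1 (X ω) - g₀1 (X ω))))
          - ((1 - D ω) / (1 - (m₀ (X ω) + r * (m (X ω) - m₀ (X ω)))))
              * (Y ω - (g₀0 (X ω) + r * (g0 (X ω) - g₀0 (X ω)))) - θ₀) ∂P
        = r ^ 2 * ∫ ω, (m (X ω) - m₀ (X ω)) *
            ((g1 (X ω) - g₀1 (X ω)) / (m₀ (X ω) + r * (m (X ω) - m₀ (X ω)))
              + (g0 (X ω) - g₀0 (X ω))
                / (1 - (m₀ (X ω) + r * (m (X ω) - m₀ (X ω))))) ∂P) ∧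
      |∫ ω, (((g₀1 (X ω) + r * (g1 (X ω) - g₀1 (X ω)))
              - (g₀0 (X ω) + r * (g0 (X ω) - g₀0 (X ω))))
          + (D ω / (m₀ (X ω) + r * (m (X ω) - m₀ (X ω))))
              * (Y ω - (g₀1 (X ω) + r * (g1 (X ω) - g₀1 (X ω))))
          - ((1 - D ω) / (1 - (m₀ (X ω) + r * (m (X ω) - m₀ (X ω)))))
              * (Y ω - (g₀0 (X ω) + r * (g0 (X ω) - g₀0 (X ω)))) - θ₀) ∂P|
        ≤ r ^ 2 * ε⁻¹ * Real.sqrt (∫ ω, (m (X ω) - m₀ (X ω)) ^ 2 ∂P) *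
            (Real.sqrt (∫ ω, (g1 (X ω) - g₀1 (X ω)) ^ 2 ∂P)
              + Real.sqrt (∫ ω, (g0 (X ω) - g₀0 (X ω)) ^ 2 ∂P)) := by
  intro r hr0 hr1
  have hC₀ : ∀ x, |g₀1 x + r * (g1 x - g₀1 x)| ≤ C₀ + C₁ ∧
      |g₀0 x + r * (g0 x - g₀0 x)| ≤ C₀ + C₁ := by
    have key : ∀ a b : ℝ, |a| ≤ C₀ → |b| ≤ C₁ → |a + r * (b - a)| ≤ C₀ + C₁ := by
      intro a b ha hb
      have h1 : a + r * (b - a) = (1 - r) * a + r * b := by ring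
      have p0 := abs_nonneg a
      have p1 := abs_nonneg b
      calc |a + r * (b - a)| ≤ |(1 - r) * a| + |r * b| := by rw [h1]; exact abs_add_le _ _
        _ = (1 - r) * |a| + r * |b| := by
          rw [abs_mul, abs_mul, abs_of_nonneg hr0, abs_of_nonneg (by linarith : 0 ≤ 1 - r)]
        _ ≤ C₀ + C₁ := by nlinarith
    exact fun x => ⟨key _ _ (hg₀1bd x) (hg1bd x), key _ _ (hg₀0bd x) (hg0bd x)⟩
  have hM : ∀ x, ε ≤ m₀ x + r * (m x - m₀ x) ∧ ε ≤ 1 - (m₀ x + r * (m x - m₀ x)) := by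
    intro x
    obtain ⟨h1, h2⟩ := hm₀bd x
    obtain ⟨h3, h4⟩ := hmbd x
    constructor <;> nlinarith
  have hd : ∀ x, |m x - m₀ x| ≤ 1 := by
    intro x
    obtain ⟨h1, h2⟩ := hm₀bd x
    obtain ⟨h3, h4⟩ := hmbd x
    rw [abs_le]; constructor <;> linarith
  have ha1 : ∀ x, |g1 x - g₀1 x| ≤ C₁ + C₀ := fun x =>
    (abs_sub _ _).trans (add_le_add (hg1bd x) (hg₀1bd x))
  have ha0 : ∀ x, |g0 x - g₀0 x| ≤ C₁ + C₀ := fun x =>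
    (abs_sub _ _).trans (add_le_add (hg0bd x) (hg₀0bd x))
  have hDint : Integrable D P :=
    Integrable.of_bound hD.aestronglyMeasurable 1
      (Filter.Eventually.of_forall fun ω => by rcases hD01 ω with h | h <;> simp [h])
  obtain ⟨i1, e1⟩ := aipw_orth P X hX _ hDY _ hg₀1ver
    (fun x => 1 / (m₀ x + r * (m x - m₀ x))) (by fun_prop) (ε⁻¹ * 1)
    (fun x => aipw_div_bd hε0 (hM x).1 (by simp))
  obtain ⟨i2, e2⟩ := aipw_orth P X hX _ hDY' _ hg₀0ver
    (fun x => 1 / (1 - (m₀ x + r * (m x - m₀ x)))) (by fun_prop) (ε⁻¹ * 1)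
    (fun x => aipw_div_bd hε0 (hM x).2 (by simp))
  obtain ⟨i3, e3⟩ := aipw_orth P X hX _ hDint _ hm₀ver
    (fun x => (g₀1 x + r * (g1 x - g₀1 x)) / (m₀ x + r * (m x - m₀ x))
      + (g₀0 x + r * (g0 x - g₀0 x)) / (1 - (m₀ x + r * (m x - m₀ x)))) (by fun_prop)
    (ε⁻¹ * (C₀ + C₁) + ε⁻¹ * (C₀ + C₁))
    (fun x => (abs_add_le _ _).trans (add_le_add (aipw_div_bd hε0 (hM x).1 (hC₀ x).1)
      (aipw_div_bd hε0 (hM x).2 (hC₀ x).2)))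
  have iK := aipw_integrable_comp P X hX (fun x => (m x - m₀ x) *
            ((g1 x - g₀1 x) / (m₀ x + r * (m x - m₀ x))
              + (g0 x - g₀0 x) / (1 - (m₀ x + r * (m x - m₀ x))))) (by fun_prop)
    (1 * (ε⁻¹ * (C₁ + C₀) + ε⁻¹ * (C₁ + C₀))) (fun x => by
      rw [abs_mul]
      exact mul_le_mul (hd x) ((abs_add_le _ _).trans (add_le_add
        (aipw_div_bd hε0 (hM x).1 (ha1 x)) (aipw_div_bd hε0 (hM x).2 (ha0 x))))
        (abs_nonneg _) zero_le_one)
  have iT := aipw_integrable_comp P X hX (fun x => g₀1 x - g₀0 x) (by fun_prop) (C₀ + C₀)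
    (fun x => (abs_sub _ _).trans (add_le_add (hg₀1bd x) (hg₀0bd x)))
  have heq : (∫ ω, (((g₀1 (X ω) + r * (g1 (X ω) - g₀1 (X ω)))
              - (g₀0 (X ω) + r * (g0 (X ω) - g₀0 (X ω))))
          + (D ω / (m₀ (X ω) + r * (m (X ω) - m₀ (X ω))))
              * (Y ω - (g₀1 (X ω) + r * (g1 (X ω) - g₀1 (X ω))))
          - ((1 - D ω) / (1 - (m₀ (X ω) + r * (m (X ω) - m₀ (X ω)))))
              * (Y ω - (g₀0 (X ω) + r * (g0 (X ω) - g₀0 (X ω)))) - θ₀) ∂P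
        = r ^ 2 * ∫ ω, (m (X ω) - m₀ (X ω)) *
            ((g1 (X ω) - g₀1 (X ω)) / (m₀ (X ω) + r * (m (X ω) - m₀ (X ω)))
              + (g0 (X ω) - g₀0 (X ω))
                / (1 - (m₀ (X ω) + r * (m (X ω) - m₀ (X ω))))) ∂P) := by
    have k1 := (iK.const_mul (r ^ 2)).add i1
    have k2 := k1.sub i2
    have k3 := k2.sub i3
    have k4 := k3.add iT
    rw [← sub_eq_zero]
    have hS := integral_sub k4 (integrable_const θ₀)
    have h4 := integral_add k3 iT
    have h3 := integral_sub k2 i3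
    have h2 := integral_sub k1 i2
    have h1 := integral_add (iK.const_mul (r ^ 2)) i1
    rw [integral_const_mul] at h1
    simp only [Pi.add_apply, Pi.sub_apply] at hS h4 h3 h2 h1
    rw [h4, h3, h2, h1, e1, e2, e3, ← hθ₀, integral_const, probReal_univ, one_smul] at hS
    rw [sub_eq_zero]
    refine Eq.trans ?_ (hS.trans (by ring))
    refine integral_congr_ae (Filter.Eventually.of_forall fun ω => ?_)
    have p1 : m₀ (X ω) + r * (m (X ω) - m₀ (X ω)) ≠ 0 := (hε0.trans_le (hM (X ω)).1).ne.symm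
    have p2 : 1 - (m₀ (X ω) + r * (m (X ω) - m₀ (X ω))) ≠ 0 :=
      (hε0.trans_le (hM (X ω)).2).ne.symm
    simp only []
    generalize hMM : m₀ (X ω) + r * (m (X ω) - m₀ (X ω)) = M at p1 p2 ⊢
    have hm' : r * (m (X ω) - m₀ (X ω)) = M - m₀ (X ω) := by linarith
    have hrw : ∀ t : ℝ, r ^ 2 * ((m (X ω) - m₀ (X ω)) * t) = (M - m₀ (X ω)) * (r * t) := by
      intro t; rw [← hm']; ring
    rw [hrw]
    field_simp
    ring
  refine ⟨heq, ?_⟩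
  rw [heq, abs_mul, abs_of_nonneg (sq_nonneg r), mul_assoc (r ^ 2), mul_assoc (r ^ 2)]
  refine mul_le_mul_of_nonneg_left ?_ (sq_nonneg r)
  have c1 := aipw_cs P (fun ω => m (X ω) - m₀ (X ω)) (fun ω => g1 (X ω) - g₀1 (X ω))
    (by fun_prop) (by fun_prop) _ _ (fun ω => hd (X ω)) (fun ω => ha1 (X ω))
  have c0 := aipw_cs P (fun ω => m (X ω) - m₀ (X ω)) (fun ω => g0 (X ω) - g₀0 (X ω))
    (by fun_prop) (by fun_prop) _ _ (fun ω => hd (X ω)) (fun ω => ha0 (X ω))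
  have j1 := aipw_integrable_comp P X hX (fun x => |m x - m₀ x| * |g1 x - g₀1 x|)
    (by fun_prop) (1 * (C₁ + C₀)) (fun x => by
      rw [abs_mul, abs_abs, abs_abs]
      exact mul_le_mul (hd x) (ha1 x) (abs_nonneg _) zero_le_one)
  have j0 := aipw_integrable_comp P X hX (fun x => |m x - m₀ x| * |g0 x - g₀0 x|)
    (by fun_prop) (1 * (C₁ + C₀)) (fun x => by
      rw [abs_mul, abs_abs, abs_abs]
      exact mul_le_mul (hd x) (ha0 x) (abs_nonneg _) zero_le_one)
  have hle : |∫ ω, (m (X ω) - m₀ (X ω)) *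
            ((g1 (X ω) - g₀1 (X ω)) / (m₀ (X ω) + r * (m (X ω) - m₀ (X ω)))
              + (g0 (X ω) - g₀0 (X ω))
                / (1 - (m₀ (X ω) + r * (m (X ω) - m₀ (X ω))))) ∂P| ≤
      ∫ ω, ε⁻¹ * (|m (X ω) - m₀ (X ω)| * |g1 (X ω) - g₀1 (X ω)|
        + |m (X ω) - m₀ (X ω)| * |g0 (X ω) - g₀0 (X ω)|) ∂P := by
    refine abs_integral_le_integral_abs.trans ?_
    refine integral_mono iK.abs ((j1.add j0).const_mul _) fun ω => ?_
    have h1 := aipw_div_bd hε0 (hM (X ω)).1 (le_refl |g1 (X ω) - g₀1 (X ω)|)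
    have h0 := aipw_div_bd hε0 (hM (X ω)).2 (le_refl |g0 (X ω) - g₀0 (X ω)|)
    have h := (abs_add_le _ _).trans (add_le_add h1 h0)
    have := mul_le_mul_of_nonneg_left h (abs_nonneg (m (X ω) - m₀ (X ω)))
    rw [← abs_mul] at this
    refine this.trans (le_of_eq ?_)
    beta_reduce
    ring
  rw [integral_const_mul, integral_add j1 j0] at hle
  refine hle.trans ?_
  rw [mul_assoc]
  refine mul_le_mul_of_nonneg_left ?_ (inv_pos.2 hε0).le
  rw [mul_add]
  exact add_le_add c1 c0
end
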